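/- arXiv:1306.0435 — 2 statements merged into one kernel-verified Lean document; each statement's English description precedes it below -/
import Mathlib

section
/- Let Q, Qₙ ∈ L²_unif(ℝ) and τ, τₙ ∈ L¹_unif(ℝ), and set aₙ := 2( ‖Q − Qₙ‖_{L²_unif(ℝ)} + ‖τ − τₙ‖_{L¹_unif(ℝ)} ). Define for u ∈ H¹(ℝ) the forms t₀[u] := ∫_ℝ |u'|² − ∫_ℝ Q( conj(u') u + conj(u) u' ) + ∫_ℝ τ |u|² and tₙ[u] := ∫_ℝ |u'|² − ∫_ℝ Qₙ( conj(u') u + conj(u) u' ) + ∫_ℝ τₙ |u|². Then for every u ∈ H¹(ℝ): | tₙ[u] − t₀[u] | ≤ aₙ ‖u'‖²_{L²(ℝ)} + 4 aₙ ‖u‖²_{L²(ℝ)}. -/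
open MeasureTheory

/-- The Stepanov `L²_unif` norm: `(sup_t ∫_t^{t+1} |Q|²)^{1/2}`. -/
noncomputable def stepL2 (Q : ℝ → ℂ) : ℝ :=
  Real.sqrt (⨆ t : ℝ, ∫ s in t..(t + 1), ‖Q s‖ ^ 2)

/-- The Stepanov `L¹_unif` norm: `sup_t ∫_t^{t+1} |τ|`. -/
noncomputable def stepL1 (τ : ℝ → ℂ) : ℝ :=
  ⨆ t : ℝ, ∫ s in t..(t + 1), ‖τ s‖

/-- Membership in the Stepanov space `L²_unif(ℝ)`: locally square integrable with
finite Stepanov norm. -/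
def InStepL2 (Q : ℝ → ℂ) : Prop :=
  AEStronglyMeasurable Q volume ∧
  LocallyIntegrable (fun s => ‖Q s‖ ^ 2) volume ∧
  BddAbove (Set.range fun t : ℝ => ∫ s in t..(t + 1), ‖Q s‖ ^ 2)

/-- Membership in the Stepanov space `L¹_unif(ℝ)`: locally integrable with
finite Stepanov norm. -/
def InStepL1 (τ : ℝ → ℂ) : Prop :=
  LocallyIntegrable τ volume ∧
  BddAbove (Set.range fun t : ℝ => ∫ s in t..(t + 1), ‖τ s‖)

/-- `u ∈ H¹(ℝ)` with derivative `u'`: `u` is absolutely continuous with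
`u x = u 0 + ∫_0^x u'`, and both `u` and `u'` are square integrable. -/
def InH1 (u u' : ℝ → ℂ) : Prop :=
  LocallyIntegrable u' volume ∧
  (∀ x : ℝ, u x = u 0 + ∫ s in (0:ℝ)..x, u' s) ∧
  MemLp u 2 volume ∧ MemLp u' 2 volume

/-- The constant `K = 2(‖Q‖_{L²_unif} + ‖τ‖_{L¹_unif})`. -/
noncomputable def Kc (Q τ : ℝ → ℂ) : ℝ := 2 * (stepL2 Q + stepL1 τ)

/-- The sesquilinear form `t[u] = ‖u'‖² - ∫ Q (conj(u')u + conj(u)u') + ∫ τ|u|²`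
associated with the Schrödinger operator with potential `q = Q' + τ`. -/
noncomputable def tform (Q τ u u' : ℝ → ℂ) : ℂ :=
  (Complex.ofReal (∫ x : ℝ, ‖u' x‖ ^ 2))
    - (∫ x : ℝ, Q x * ((starRingEnd ℂ) (u' x) * u x + (starRingEnd ℂ) (u x) * u' x))
    + ∫ x : ℝ, τ x * (‖u x‖ : ℂ) ^ 2

/-!
Averaging `‖u x‖ ≤ ‖u y‖ + ∫ ‖u'‖` over `y` in a window `I` of length `1/2` containing `x` gives
`‖u x‖² ≤ ∫_I ‖u'‖² + 4 ∫_I ‖u‖²`. Multiplying by a weight `w ≥ 0` whose integrals over such windows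
are at most `C` and summing over a tiling of `ℝ` yields `∫ w‖u‖² ≤ C (‖u'‖² + 4‖u‖²)`. The weight
`|τ - τₙ|` controls the potential term; for the cross term, the weight `|Q - Qₙ|²` bounds
`(Q - Qₙ) u` in `L²`, and the Cauchy–Schwarz inequality against `u'` does the rest.
-/

section CauchySchwarz

variable {α E F : Type*} [MeasurableSpace α] {μ : Measure α}
  [NormedAddCommGroup E] [NormedAddCommGroup F]

lemma sq_integral_norm_mul_norm_le {f : α → E} {g : α → F} (hf : MemLp f 2 μ) (hg : MemLp g 2 μ) :
    (∫ x, ‖f x‖ * ‖g x‖ ∂μ) ^ 2 ≤ (∫ x, ‖f x‖ ^ 2 ∂μ) * ∫ x, ‖g x‖ ^ 2 ∂μ := by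
  have holder : ∫ x, ‖f x‖ * ‖g x‖ ∂μ ≤ √(∫ x, ‖f x‖ ^ 2 ∂μ) * √(∫ x, ‖g x‖ ^ 2 ∂μ) := by
    have := integral_mul_norm_le_Lp_mul_Lq Real.HolderConjugate.two_two
      (f := fun x => ‖f x‖) (g := fun x => ‖g x‖) (by simpa using hf.norm) (by simpa using hg.norm)
    simpa [Real.sqrt_eq_rpow] using this
  calc (∫ x, ‖f x‖ * ‖g x‖ ∂μ) ^ 2
      ≤ (√(∫ x, ‖f x‖ ^ 2 ∂μ) * √(∫ x, ‖g x‖ ^ 2 ∂μ)) ^ 2 := by gcongr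
    _ = (∫ x, ‖f x‖ ^ 2 ∂μ) * ∫ x, ‖g x‖ ^ 2 ∂μ := by
        rw [mul_pow, Real.sq_sqrt (by positivity), Real.sq_sqrt (by positivity)]

lemma sq_integral_norm_le [IsFiniteMeasure μ] {f : α → E} (hf : MemLp f 2 μ) :
    (∫ x, ‖f x‖ ∂μ) ^ 2 ≤ μ.real Set.univ * ∫ x, ‖f x‖ ^ 2 ∂μ := by
  simpa using sq_integral_norm_mul_norm_le (memLp_const (1 : ℝ)) hf

end CauchySchwarz

section Tiling

variable {α ι E : Type*} [MeasurableSpace α] {μ : Measure α} [Countable ι]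
  [NormedAddCommGroup E] {s : ι → Set α} {f : α → E} {g : α → ℝ}

lemma integrable_of_setIntegral_norm_le (hs : ∀ i, MeasurableSet (s i))
    (hd : Pairwise (Function.onFun Disjoint s)) (hU : ⋃ i, s i = Set.univ)
    (hf : ∀ i, IntegrableOn f (s i) μ) (hg : Integrable g μ)
    (hfg : ∀ i, ∫ x in s i, ‖f x‖ ∂μ ≤ ∫ x in s i, g x ∂μ) : Integrable f μ := by
  have g_summable : Summable fun i => ∫ x in s i, g x ∂μ :=
    (hasSum_integral_iUnion hs hd hg.integrableOn).summable
  rw [← integrableOn_univ, ← hU]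
  exact integrableOn_iUnion_of_summable_integral_norm hf
    (g_summable.of_nonneg_of_le (fun i => by positivity) hfg)

lemma integral_le_of_setIntegral_le (hs : ∀ i, MeasurableSet (s i))
    (hd : Pairwise (Function.onFun Disjoint s)) (hU : ⋃ i, s i = Set.univ) {h : α → ℝ}
    (hh : Integrable h μ) (hg : Integrable g μ)
    (hle : ∀ i, ∫ x in s i, h x ∂μ ≤ ∫ x in s i, g x ∂μ) : ∫ x, h x ∂μ ≤ ∫ x, g x ∂μ := by
  rw [← setIntegral_univ (f := h), ← setIntegral_univ (f := g), ← hU]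
  exact hasSum_le hle (hasSum_integral_iUnion hs hd hh.integrableOn)
    (hasSum_integral_iUnion hs hd hg.integrableOn)

lemma integrable_and_integral_norm_le_of_Ioc {f : ℝ → E} {g : ℝ → ℝ} {ℓ : ℝ} (hℓ : 0 < ℓ)
    (hf : ∀ a, IntegrableOn f (Set.Ioc a (a + ℓ))) (hg : Integrable g)
    (hfg : ∀ a, ∫ x in Set.Ioc a (a + ℓ), ‖f x‖ ≤ ∫ x in Set.Ioc a (a + ℓ), g x) :
    Integrable f ∧ ∫ x, ‖f x‖ ≤ ∫ x, g x := by
  let tile : ℤ → Set ℝ := fun n => Set.Ioc (n • ℓ) (n • ℓ + ℓ)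
  have tile_measurable (n : ℤ) : MeasurableSet (tile n) := measurableSet_Ioc
  have tile_disjoint : Pairwise (Function.onFun Disjoint tile) := by
    simpa only [tile, add_one_zsmul] using Set.pairwise_disjoint_Ioc_zsmul ℓ
  have tile_cover : ⋃ n, tile n = Set.univ := by
    simpa only [tile, add_one_zsmul] using iUnion_Ioc_zsmul hℓ
  have f_int : Integrable f := integrable_of_setIntegral_norm_le tile_measurable tile_disjoint
    tile_cover (fun n => hf (n • ℓ)) hg fun n => hfg (n • ℓ)
  exact ⟨f_int, integral_le_of_setIntegral_le tile_measurable tile_disjoint tile_cover f_int.norm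
    hg fun n => hfg (n • ℓ)⟩

end Tiling

section Sobolev

variable {E : Type*} [NormedAddCommGroup E] {f f' : ℝ → E}

/-- The density `2ℓ‖f'‖² + (2/ℓ)‖f‖²`, whose integral over a window of length `ℓ` dominates
`‖f‖²` throughout that window when `f'` is the derivative of `f`. -/
noncomputable def sobolevDensity (ℓ : ℝ) (f f' : ℝ → E) (x : ℝ) : ℝ :=
  2 * ℓ * ‖f' x‖ ^ 2 + 2 / ℓ * ‖f x‖ ^ 2

lemma integrable_sobolevDensity {μ : Measure ℝ} (hf : MemLp f 2 μ) (hf' : MemLp f' 2 μ) (ℓ : ℝ) :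
    Integrable (sobolevDensity ℓ f f') μ :=
  ((hf'.integrable_norm_pow two_ne_zero).const_mul _).add
    ((hf.integrable_norm_pow two_ne_zero).const_mul _)

lemma integral_sobolevDensity {μ : Measure ℝ} (hf : MemLp f 2 μ) (hf' : MemLp f' 2 μ) (ℓ : ℝ) :
    ∫ x, sobolevDensity ℓ f f' x ∂μ =
      2 * ℓ * (∫ x, ‖f' x‖ ^ 2 ∂μ) + 2 / ℓ * ∫ x, ‖f x‖ ^ 2 ∂μ := by
  simp only [sobolevDensity]
  rw [integral_add ((hf'.integrable_norm_pow two_ne_zero).const_mul _)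
    ((hf.integrable_norm_pow two_ne_zero).const_mul _), integral_const_mul, integral_const_mul]

variable [NormedSpace ℝ E]

lemma norm_intervalIntegral_le_setIntegral_norm {a b x y : ℝ} (hf : IntegrableOn f (Set.Ioc a b))
    (hx : x ∈ Set.Ioc a b) (hy : y ∈ Set.Ioc a b) :
    ‖∫ s in x..y, f s‖ ≤ ∫ s in Set.Ioc a b, ‖f s‖ := by
  have hsub : Set.uIoc x y ⊆ Set.Ioc a b :=
    Set.Ioc_subset_Ioc (le_min hx.1.le hy.1.le) (max_le hx.2 hy.2)
  exact intervalIntegral.norm_integral_le_integral_norm_uIoc.trans <|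
    setIntegral_mono_set hf.norm (ae_of_all _ fun _ => norm_nonneg _) hsub.eventuallyLE

lemma length_mul_norm_sq_le {a b x : ℝ} (hff' : ∀ y ∈ Set.Ioc a b, f x - f y = ∫ s in y..x, f' s)
    (hf : MemLp f 2 (volume.restrict (Set.Ioc a b)))
    (hf' : MemLp f' 2 (volume.restrict (Set.Ioc a b))) (hx : x ∈ Set.Ioc a b) :
    (b - a) * ‖f x‖ ^ 2 ≤ 2 * (b - a) ^ 2 * (∫ s in Set.Ioc a b, ‖f' s‖ ^ 2)
      + 2 * ∫ s in Set.Ioc a b, ‖f s‖ ^ 2 := by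
  have hvol : volume.real (Set.Ioc a b) = b - a :=
    Real.volume_real_Ioc_of_le (hx.1.le.trans hx.2)
  set A := ∫ s in Set.Ioc a b, ‖f' s‖ ^ 2
  have hf_sq : Integrable (fun s => ‖f s‖ ^ 2) (volume.restrict (Set.Ioc a b)) :=
    hf.integrable_norm_pow two_ne_zero
  have sq_variation_le : (∫ s in Set.Ioc a b, ‖f' s‖) ^ 2 ≤ (b - a) * A := by
    simpa [hvol] using sq_integral_norm_le hf'
  have le_at (y : ℝ) (hy : y ∈ Set.Ioc a b) : ‖f x‖ ^ 2 ≤ 2 * ((b - a) * A) + 2 * ‖f y‖ ^ 2 :=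
    calc ‖f x‖ ^ 2 ≤ (‖f y‖ + ∫ s in Set.Ioc a b, ‖f' s‖) ^ 2 := by
          gcongr
          refine (norm_le_norm_add_norm_sub' (f x) (f y)).trans (add_le_add_right ?_ _)
          rw [hff' y hy]
          exact norm_intervalIntegral_le_setIntegral_norm (hf'.integrable one_le_two) hy hx
      _ ≤ 2 * (‖f y‖ ^ 2 + (∫ s in Set.Ioc a b, ‖f' s‖) ^ 2) := add_sq_le
      _ ≤ 2 * ((b - a) * A) + 2 * ‖f y‖ ^ 2 := by linarith
  calc (b - a) * ‖f x‖ ^ 2 = ∫ _ in Set.Ioc a b, ‖f x‖ ^ 2 := by simp [hvol]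
    _ ≤ ∫ y in Set.Ioc a b, (2 * ((b - a) * A) + 2 * ‖f y‖ ^ 2) :=
        setIntegral_mono_on (integrable_const _)
          ((integrable_const (2 * ((b - a) * A))).fun_add (hf_sq.const_mul 2))
          measurableSet_Ioc le_at
    _ = 2 * (b - a) ^ 2 * A + 2 * ∫ s in Set.Ioc a b, ‖f s‖ ^ 2 := by
        rw [integral_add (integrable_const _) (hf_sq.const_mul 2), setIntegral_const, hvol,
          integral_const_mul, smul_eq_mul]
        ring

lemma norm_sq_le_setIntegral_sobolevDensity {a ℓ x : ℝ} (hℓ : 0 < ℓ)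
    (hff' : ∀ y ∈ Set.Ioc a (a + ℓ), f x - f y = ∫ s in y..x, f' s)
    (hf : MemLp f 2 (volume.restrict (Set.Ioc a (a + ℓ))))
    (hf' : MemLp f' 2 (volume.restrict (Set.Ioc a (a + ℓ)))) (hx : x ∈ Set.Ioc a (a + ℓ)) :
    ‖f x‖ ^ 2 ≤ ∫ s in Set.Ioc a (a + ℓ), sobolevDensity ℓ f f' s := by
  have h := length_mul_norm_sq_le hff' hf hf' hx
  rw [add_sub_cancel_left] at h
  rw [integral_sobolevDensity hf hf']
  refine le_of_mul_le_mul_left (h.trans_eq ?_) hℓ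
  field_simp

lemma integrableOn_mul_norm_sq_and_setIntegral_le {a ℓ : ℝ} (hℓ : 0 < ℓ)
    (hff' : ∀ x ∈ Set.Ioc a (a + ℓ), ∀ y ∈ Set.Ioc a (a + ℓ), f x - f y = ∫ s in y..x, f' s)
    (hf : MemLp f 2 (volume.restrict (Set.Ioc a (a + ℓ))))
    (hf' : MemLp f' 2 (volume.restrict (Set.Ioc a (a + ℓ)))) {w : ℝ → ℝ} (hw0 : 0 ≤ w)
    (hw : IntegrableOn w (Set.Ioc a (a + ℓ))) :
    IntegrableOn (fun x => w x * ‖f x‖ ^ 2) (Set.Ioc a (a + ℓ)) ∧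
      ∫ x in Set.Ioc a (a + ℓ), w x * ‖f x‖ ^ 2 ≤
        (∫ x in Set.Ioc a (a + ℓ), w x) * ∫ x in Set.Ioc a (a + ℓ), sobolevDensity ℓ f f' x := by
  set D := ∫ x in Set.Ioc a (a + ℓ), sobolevDensity ℓ f f' x
  have le_mul_D (x : ℝ) (hx : x ∈ Set.Ioc a (a + ℓ)) : w x * ‖f x‖ ^ 2 ≤ w x * D :=
    mul_le_mul_of_nonneg_left (norm_sq_le_setIntegral_sobolevDensity hℓ (hff' x hx) hf hf' hx)
      (hw0 x)
  have prod_int : IntegrableOn (fun x => w x * ‖f x‖ ^ 2) (Set.Ioc a (a + ℓ)) := by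
    refine (hw.mul_const D).mono' (hw.aestronglyMeasurable.mul (hf.1.norm.pow 2)) ?_
    filter_upwards [ae_restrict_mem measurableSet_Ioc] with x hx
    rw [Real.norm_of_nonneg (mul_nonneg (hw0 x) (sq_nonneg _))]
    exact le_mul_D x hx
  refine ⟨prod_int, ?_⟩
  rw [← integral_mul_const]
  exact setIntegral_mono_on prod_int (hw.mul_const D) measurableSet_Ioc le_mul_D

lemma integrable_mul_norm_sq_and_integral_le (hff' : ∀ x y, f y - f x = ∫ s in x..y, f' s)
    (hf : MemLp f 2) (hf' : MemLp f' 2) {w : ℝ → ℝ} (hw0 : 0 ≤ w) (hw : LocallyIntegrable w)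
    {ℓ C : ℝ} (hℓ : 0 < ℓ) (hC : ∀ a, ∫ s in Set.Ioc a (a + ℓ), w s ≤ C) :
    Integrable (fun x => w x * ‖f x‖ ^ 2) ∧
      ∫ x, w x * ‖f x‖ ^ 2 ≤ C * (2 * ℓ * (∫ x, ‖f' x‖ ^ 2) + 2 / ℓ * ∫ x, ‖f x‖ ^ 2) := by
  have on_window (a : ℝ) := integrableOn_mul_norm_sq_and_setIntegral_le hℓ
    (fun x _ y _ => hff' y x) (hf.restrict (Set.Ioc a (a + ℓ))) (hf'.restrict _) hw0
    ((hw.integrableOn_isCompact isCompact_Icc).mono_set Set.Ioc_subset_Icc_self)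
  have norm_eq (x : ℝ) : ‖w x * ‖f x‖ ^ 2‖ = w x * ‖f x‖ ^ 2 :=
    Real.norm_of_nonneg (mul_nonneg (hw0 x) (sq_nonneg _))
  have window_le (a : ℝ) : ∫ x in Set.Ioc a (a + ℓ), ‖w x * ‖f x‖ ^ 2‖ ≤
      ∫ x in Set.Ioc a (a + ℓ), C * sobolevDensity ℓ f f' x := by
    have density_nonneg : 0 ≤ ∫ x in Set.Ioc a (a + ℓ), sobolevDensity ℓ f f' x :=
      integral_nonneg fun x => by unfold sobolevDensity; positivity
    simp only [norm_eq, integral_const_mul]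
    exact (on_window a).2.trans (mul_le_mul_of_nonneg_right (hC a) density_nonneg)
  have := integrable_and_integral_norm_le_of_Ioc hℓ (fun a => (on_window a).1)
    ((integrable_sobolevDensity hf hf' ℓ).const_mul C) window_le
  simpa only [norm_eq, integral_const_mul, integral_sobolevDensity hf hf'] using this

end Sobolev

section Stepanov

lemma setIntegral_Ioc_le_iSup {w : ℝ → ℝ} {ℓ : ℝ} (hℓ : ℓ ≤ 1) (hw0 : 0 ≤ w)
    (hw : LocallyIntegrable w)
    (hbdd : BddAbove (Set.range fun t : ℝ => ∫ s in t..(t + 1), w s)) (a : ℝ) :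
    ∫ s in Set.Ioc a (a + ℓ), w s ≤ ⨆ t : ℝ, ∫ s in t..(t + 1), w s := by
  refine le_ciSup_of_le hbdd a ?_
  rw [intervalIntegral.integral_of_le (by linarith)]
  refine setIntegral_mono_set
    ((hw.integrableOn_isCompact isCompact_Icc).mono_set Set.Ioc_subset_Icc_self)
    (ae_of_all _ hw0) (Set.Ioc_subset_Ioc_right ?_).eventuallyLE
  linarith

lemma bddAbove_range_unit_integral_of_le {h F G : ℝ → ℝ} {c : ℝ} (hc : 0 ≤ c)
    (hh : LocallyIntegrable h) (hF : LocallyIntegrable F) (hG : LocallyIntegrable G)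
    (hle : ∀ x, h x ≤ c * (F x + G x))
    (bddF : BddAbove (Set.range fun t : ℝ => ∫ s in t..(t + 1), F s))
    (bddG : BddAbove (Set.range fun t : ℝ => ∫ s in t..(t + 1), G s)) :
    BddAbove (Set.range fun t : ℝ => ∫ s in t..(t + 1), h s) := by
  obtain ⟨A, hA⟩ := bddF
  obtain ⟨B, hB⟩ := bddG
  refine ⟨c * (A + B), Set.forall_mem_range.2 fun t => ?_⟩
  have intervalIntegrable {f : ℝ → ℝ} (hf : LocallyIntegrable f) :
      IntervalIntegrable f volume t (t + 1) :=
    (hf.integrableOn_isCompact isCompact_uIcc).intervalIntegrable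
  calc ∫ s in t..(t + 1), h s ≤ ∫ s in t..(t + 1), c * (F s + G s) :=
        intervalIntegral.integral_mono_on (by linarith) (intervalIntegrable hh)
          (((intervalIntegrable hF).add (intervalIntegrable hG)).const_mul c) fun x _ => hle x
    _ = c * ((∫ s in t..(t + 1), F s) + ∫ s in t..(t + 1), G s) := by
        rw [intervalIntegral.integral_const_mul,
          intervalIntegral.integral_add (intervalIntegrable hF) (intervalIntegrable hG)]
    _ ≤ c * (A + B) := by
        gcongr
        exacts [hA ⟨t, rfl⟩, hB ⟨t, rfl⟩]

lemma locallyIntegrable_norm {X E : Type*} [TopologicalSpace X] [MeasurableSpace X] {μ : Measure X}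
    [NormedAddCommGroup E] {f : X → E} (hf : LocallyIntegrable f μ) :
    LocallyIntegrable (fun x => ‖f x‖) μ :=
  locallyIntegrableOn_univ.1 (hf.locallyIntegrableOn Set.univ).norm

lemma InStepL1.sub {σ τ : ℝ → ℂ} (hσ : InStepL1 σ) (hτ : InStepL1 τ) :
    InStepL1 (fun x => σ x - τ x) := by
  have hsub : LocallyIntegrable (fun x => σ x - τ x) := hσ.1.sub hτ.1
  refine ⟨hsub, bddAbove_range_unit_integral_of_le zero_le_one (locallyIntegrable_norm hsub)
    (locallyIntegrable_norm hσ.1) (locallyIntegrable_norm hτ.1) (fun x => ?_) hσ.2 hτ.2⟩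
  simpa only [one_mul] using norm_sub_le (σ x) (τ x)

lemma InStepL2.sub {P Q : ℝ → ℂ} (hP : InStepL2 P) (hQ : InStepL2 Q) :
    InStepL2 (fun x => P x - Q x) := by
  have sq_norm_sub_le (x : ℝ) : ‖P x - Q x‖ ^ 2 ≤ 2 * (‖P x‖ ^ 2 + ‖Q x‖ ^ 2) :=
    (pow_le_pow_left₀ (norm_nonneg _) (norm_sub_le _ _) 2).trans add_sq_le
  have meas_sub : AEStronglyMeasurable (fun x => P x - Q x) := hP.1.sub hQ.1
  have sq_loc : LocallyIntegrable (fun x => ‖P x - Q x‖ ^ 2) := by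
    refine ((hP.2.1.add hQ.2.1).smul (2 : ℝ)).mono (meas_sub.norm.pow 2) (ae_of_all _ fun x => ?_)
    rw [Real.norm_of_nonneg (sq_nonneg _)]
    exact (sq_norm_sub_le x).trans (le_abs_self _)
  exact ⟨meas_sub, sq_loc, bddAbove_range_unit_integral_of_le zero_le_two sq_loc hP.2.1 hQ.2.1
    sq_norm_sub_le hP.2.2 hQ.2.2⟩

lemma stepL1_nonneg (τ : ℝ → ℂ) : 0 ≤ stepL1 τ :=
  Real.iSup_nonneg fun _ =>
    intervalIntegral.integral_nonneg (by linarith) fun _ _ => norm_nonneg _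

lemma stepL2_nonneg (Q : ℝ → ℂ) : 0 ≤ stepL2 Q := Real.sqrt_nonneg _

lemma sq_stepL2 (Q : ℝ → ℂ) : stepL2 Q ^ 2 = ⨆ t : ℝ, ∫ s in t..(t + 1), ‖Q s‖ ^ 2 :=
  Real.sq_sqrt <| Real.iSup_nonneg fun _ =>
    intervalIntegral.integral_nonneg (by linarith) fun _ _ => by positivity

end Stepanov

section FormBounds

open scoped ComplexConjugate

variable {u u' : ℝ → ℂ}

lemma InH1.memLp (hu : InH1 u u') : MemLp u 2 := hu.2.2.1

lemma InH1.memLp_deriv (hu : InH1 u u') : MemLp u' 2 := hu.2.2.2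

lemma InH1.sub_eq_integral (hu : InH1 u u') (x y : ℝ) : u y - u x = ∫ s in x..y, u' s := by
  have intervalIntegrable (a b : ℝ) : IntervalIntegrable u' volume a b :=
    (hu.1.integrableOn_isCompact isCompact_uIcc).intervalIntegrable
  rw [hu.2.1 x, hu.2.1 y, add_sub_add_left_eq_sub,
    intervalIntegral.integral_interval_sub_left (intervalIntegrable _ _) (intervalIntegrable _ _)]

lemma InH1.integrable_weight_mul_norm_sq_and_integral_le (hu : InH1 u u') {w : ℝ → ℝ} (hw0 : 0 ≤ w)
    (hw : LocallyIntegrable w)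
    (hbdd : BddAbove (Set.range fun t : ℝ => ∫ s in t..(t + 1), w s)) :
    Integrable (fun x => w x * ‖u x‖ ^ 2) ∧ ∫ x, w x * ‖u x‖ ^ 2 ≤
      (⨆ t : ℝ, ∫ s in t..(t + 1), w s) * ((∫ x, ‖u' x‖ ^ 2) + 4 * ∫ x, ‖u x‖ ^ 2) := by
  convert integrable_mul_norm_sq_and_integral_le hu.sub_eq_integral hu.memLp hu.memLp_deriv hw0 hw
    (one_half_pos (α := ℝ)) (setIntegral_Ioc_le_iSup one_half_lt_one.le hw0 hw hbdd) using 5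
    <;> norm_num

lemma InStepL1.integrable_mul_norm_sq {τ : ℝ → ℂ} (hτ : InStepL1 τ) (hu : InH1 u u') :
    Integrable (fun x => τ x * (‖u x‖ : ℂ) ^ 2) := by
  have meas : AEStronglyMeasurable (fun x => τ x * (‖u x‖ : ℂ) ^ 2) :=
    hτ.1.aestronglyMeasurable.mul
      ((Complex.continuous_ofReal.comp_aestronglyMeasurable hu.memLp.1.norm).pow 2)
  refine (hu.integrable_weight_mul_norm_sq_and_integral_le (fun x => norm_nonneg (τ x))
    (locallyIntegrable_norm hτ.1) hτ.2).1.mono' meas (ae_of_all _ fun x => ?_)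
  simp

lemma InStepL1.norm_integral_mul_norm_sq_le {τ : ℝ → ℂ} (hτ : InStepL1 τ) (hu : InH1 u u') :
    ‖∫ x, τ x * (‖u x‖ : ℂ) ^ 2‖ ≤
      stepL1 τ * ((∫ x, ‖u' x‖ ^ 2) + 4 * ∫ x, ‖u x‖ ^ 2) :=
  calc ‖∫ x, τ x * (‖u x‖ : ℂ) ^ 2‖ ≤ ∫ x, ‖τ x * (‖u x‖ : ℂ) ^ 2‖ :=
        norm_integral_le_integral_norm _
    _ = ∫ x, ‖τ x‖ * ‖u x‖ ^ 2 := by simp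
    _ ≤ stepL1 τ * ((∫ x, ‖u' x‖ ^ 2) + 4 * ∫ x, ‖u x‖ ^ 2) :=
        (hu.integrable_weight_mul_norm_sq_and_integral_le (fun x => norm_nonneg (τ x))
          (locallyIntegrable_norm hτ.1) hτ.2).2

lemma InStepL2.memLp_mul {P : ℝ → ℂ} (hP : InStepL2 P) (hu : InH1 u u') :
    MemLp (fun x => P x * u x) 2 := by
  rw [memLp_two_iff_integrable_sq_norm (hP.1.fun_mul hu.memLp.1)]
  simpa only [norm_mul, mul_pow] using
    (hu.integrable_weight_mul_norm_sq_and_integral_le (fun x => sq_nonneg ‖P x‖) hP.2.1 hP.2.2).1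

lemma InStepL2.integral_norm_mul_sq_le {P : ℝ → ℂ} (hP : InStepL2 P) (hu : InH1 u u') :
    ∫ x, ‖P x * u x‖ ^ 2 ≤ stepL2 P ^ 2 * ((∫ x, ‖u' x‖ ^ 2) + 4 * ∫ x, ‖u x‖ ^ 2) := by
  simpa only [norm_mul, mul_pow, sq_stepL2] using
    (hu.integrable_weight_mul_norm_sq_and_integral_le (fun x => sq_nonneg ‖P x‖) hP.2.1 hP.2.2).2

lemma InStepL2.integral_norm_mul_norm_le {P : ℝ → ℂ} (hP : InStepL2 P) (hu : InH1 u u') :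
    ∫ x, ‖P x * u x‖ * ‖u' x‖ ≤ stepL2 P * ((∫ x, ‖u' x‖ ^ 2) + 2 * ∫ x, ‖u x‖ ^ 2) := by
  refine le_of_sq_le_sq ?_ (mul_nonneg (stepL2_nonneg P) (by positivity))
  calc (∫ x, ‖P x * u x‖ * ‖u' x‖) ^ 2 ≤ (∫ x, ‖P x * u x‖ ^ 2) * ∫ x, ‖u' x‖ ^ 2 :=
        sq_integral_norm_mul_norm_le (hP.memLp_mul hu) hu.memLp_deriv
    _ ≤ stepL2 P ^ 2 * ((∫ x, ‖u' x‖ ^ 2) + 4 * ∫ x, ‖u x‖ ^ 2) * ∫ x, ‖u' x‖ ^ 2 := by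
        gcongr
        exact hP.integral_norm_mul_sq_le hu
    _ ≤ (stepL2 P * ((∫ x, ‖u' x‖ ^ 2) + 2 * ∫ x, ‖u x‖ ^ 2)) ^ 2 := by
        rw [mul_pow, mul_assoc]
        gcongr
        nlinarith [sq_nonneg (∫ x, ‖u x‖ ^ 2)]

lemma norm_mul_conj_mul_add_le (p z z' : ℂ) :
    ‖p * (conj z' * z + conj z * z')‖ ≤ 2 * (‖p * z‖ * ‖z'‖) :=
  calc ‖p * (conj z' * z + conj z * z')‖ ≤ ‖p‖ * (‖z'‖ * ‖z‖ + ‖z‖ * ‖z'‖) := by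
        rw [norm_mul]
        gcongr
        simpa using norm_add_le (conj z' * z) (conj z * z')
    _ = 2 * (‖p * z‖ * ‖z'‖) := by rw [norm_mul]; ring

lemma InStepL2.integrable_mul_conj_mul_add {P : ℝ → ℂ} (hP : InStepL2 P) (hu : InH1 u u') :
    Integrable (fun x => P x * (conj (u' x) * u x + conj (u x) * u' x)) := by
  have u_meas := hu.memLp.1
  have u'_meas := hu.memLp_deriv.1
  have meas : AEStronglyMeasurable (fun x => P x * (conj (u' x) * u x + conj (u x) * u' x)) :=
    hP.1.mul (((Complex.continuous_conj.comp_aestronglyMeasurable u'_meas).mul u_meas).add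
      ((Complex.continuous_conj.comp_aestronglyMeasurable u_meas).mul u'_meas))
  exact (((hP.memLp_mul hu).norm.integrable_mul hu.memLp_deriv.norm).const_mul 2).mono' meas
    (ae_of_all _ fun x => norm_mul_conj_mul_add_le _ _ _)

lemma InStepL2.norm_integral_mul_conj_mul_add_le {P : ℝ → ℂ} (hP : InStepL2 P)
    (hu : InH1 u u') :
    ‖∫ x, P x * (conj (u' x) * u x + conj (u x) * u' x)‖ ≤
      2 * stepL2 P * ((∫ x, ‖u' x‖ ^ 2) + 2 * ∫ x, ‖u x‖ ^ 2) :=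
  calc ‖∫ x, P x * (conj (u' x) * u x + conj (u x) * u' x)‖
      ≤ ∫ x, 2 * (‖P x * u x‖ * ‖u' x‖) :=
        norm_integral_le_of_norm_le
          (((hP.memLp_mul hu).norm.integrable_mul hu.memLp_deriv.norm).const_mul 2)
          (ae_of_all _ fun _ => norm_mul_conj_mul_add_le _ _ _)
    _ = 2 * ∫ x, ‖P x * u x‖ * ‖u' x‖ := integral_const_mul _ _
    _ ≤ 2 * (stepL2 P * ((∫ x, ‖u' x‖ ^ 2) + 2 * ∫ x, ‖u x‖ ^ 2)) :=
        mul_le_mul_of_nonneg_left (hP.integral_norm_mul_norm_le hu) zero_le_two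
    _ = 2 * stepL2 P * ((∫ x, ‖u' x‖ ^ 2) + 2 * ∫ x, ‖u x‖ ^ 2) := (mul_assoc _ _ _).symm

lemma tform_sub_tform {Q Qn τ τn : ℝ → ℂ} (hQ : InStepL2 Q) (hQn : InStepL2 Qn)
    (hτ : InStepL1 τ) (hτn : InStepL1 τn) (hu : InH1 u u') :
    tform Qn τn u u' - tform Q τ u u' =
      (∫ x, (Q x - Qn x) * (conj (u' x) * u x + conj (u x) * u' x))
        - ∫ x, (τ x - τn x) * (‖u x‖ : ℂ) ^ 2 := by
  simp only [tform, sub_mul]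
  rw [integral_sub (hQ.integrable_mul_conj_mul_add hu) (hQn.integrable_mul_conj_mul_add hu),
    integral_sub (hτ.integrable_mul_norm_sq hu) (hτn.integrable_mul_norm_sq hu)]
  ring

end FormBounds

/-- Approximation estimate: with `aₙ = 2(‖Q - Qₙ‖_{L²_unif} + ‖τ - τₙ‖_{L¹_unif})`, the forms
satisfy `|tₙ[u] - t₀[u]| ≤ aₙ‖u'‖² + 4aₙ‖u‖²` for all `u ∈ H¹(ℝ)`. -/
theorem tform_approximation (Q Qn τ τn u u' : ℝ → ℂ)
    (hQ : InStepL2 Q) (hQn : InStepL2 Qn) (hτ : InStepL1 τ) (hτn : InStepL1 τn)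
    (hu : InH1 u u') :
    ‖tform Qn τn u u' - tform Q τ u u'‖ ≤
      2 * (stepL2 (fun x => Q x - Qn x) + stepL1 (fun x => τ x - τn x))
          * (∫ x : ℝ, ‖u' x‖ ^ 2)
        + 4 * (2 * (stepL2 (fun x => Q x - Qn x) + stepL1 (fun x => τ x - τn x)))
          * (∫ x : ℝ, ‖u x‖ ^ 2) := by
  rw [tform_sub_tform hQ hQn hτ hτn hu]
  have cross_le := (hQ.sub hQn).norm_integral_mul_conj_mul_add_le hu
  have potential_le := (hτ.sub hτn).norm_integral_mul_norm_sq_le hu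
  set σ₂ := stepL2 fun x => Q x - Qn x
  set σ₁ := stepL1 fun x => τ x - τn x
  set A := ∫ x, ‖u' x‖ ^ 2
  set B := ∫ x, ‖u x‖ ^ 2
  have hσ₂B : 0 ≤ σ₂ * B := mul_nonneg (stepL2_nonneg _) (by positivity)
  have hσ₁A : 0 ≤ σ₁ * A := mul_nonneg (stepL1_nonneg _) (by positivity)
  have hσ₁B : 0 ≤ σ₁ * B := mul_nonneg (stepL1_nonneg _) (by positivity)
  calc _ ≤ 2 * σ₂ * (A + 2 * B) + σ₁ * (A + 4 * B) :=
        (norm_sub_le _ _).trans (add_le_add cross_le potential_le)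
    _ ≤ 2 * (σ₂ + σ₁) * A + 4 * (2 * (σ₂ + σ₁)) * B := by linarith
end

section
/- Let Q ∈ L²_loc(ℝ,ℂ), τ ∈ L¹_loc(ℝ,ℂ). Let u, w, v, z : ℝ → ℂ be locally absolutely continuous functions such that a.e. u' = w + Qu and v' = z + conj(Q)·v, and define a.e. l[u] := −w' − Q·u' + τ·u and l⁺[v] := −( z' + conj(Q)·z + (conj(Q)² − conj(τ))·v ). Suppose u, v, l[u], l⁺[v] all belong to L²(ℝ). Then, with [u,v](t) := u(t)·conj(z(t)) − w(t)·conj(v(t)), the generalized Lagrange identity holds: ∫_ℝ l[u](x)·conj(v(x)) dx − ∫_ℝ u(x)·conj(l⁺[v](x)) dx = lim_{t→+∞}[u,v](t) − lim_{t→−∞}[u,v](t) (both limits existing and being finite). -/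
/-!
In `l[u] v̄ - u conj(l⁺[v])` the terms in `τ u v̄` and `Q² u v̄` cancel, and what remains is the
derivative of `[u, v] = u z̄ - w v̄` given by the product rule for locally absolutely continuous
functions. Both terms are integrable by the Cauchy–Schwarz inequality, so the bracket converges at
both ends of the line and its total increment is the integral of its derivative.
-/

open MeasureTheory Filter Topology

/-- The Shin–Zettl quasi-differential expression `l[u] = -(u^{[1]})' - Q u' + τ u`,
written in terms of the quasi-derivative `w = u^{[1]} = u' - Qu` (so that `u' = w + Qu`)
and the a.e. derivative `dw` of `w`. -/
noncomputable def qdL (Q τ u w dw : ℝ → ℂ) (x : ℝ) : ℂ :=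
  -dw x - Q x * (w x + Q x * u x) + τ x * u x

/-- The formally adjoint quasi-differential expression
`l⁺[v] = -( (v^{{1}})' + conj(Q) v^{{1}} + (conj(Q)² - conj(τ)) v )`, written in terms of
the adjoint quasi-derivative `z = v^{{1}} = v' - conj(Q)v` and the a.e. derivative `dz`
of `z`. -/
noncomputable def qdLplus (Q τ v z dz : ℝ → ℂ) (x : ℝ) : ℂ :=
  -(dz x + (starRingEnd ℂ) (Q x) * z x
      + (((starRingEnd ℂ) (Q x)) ^ 2 - (starRingEnd ℂ) (τ x)) * v x)

/-- The bracket `[u,v](t) = u(t) conj(v^{{1}}(t)) - u^{[1]}(t) conj(v(t))`. -/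
noncomputable def qdBracket (u w v z : ℝ → ℂ) (t : ℝ) : ℂ :=
  u t * (starRingEnd ℂ) (z t) - w t * (starRingEnd ℂ) (v t)

/-- `F` is a primitive of `f` in the sense of Lebesgue. For complete `E` this forces `F` to be
locally absolutely continuous with a.e. derivative `f`. Integrals are based at `0`; `IsPrimitive.sub_eq_integral`
gives the form with an arbitrary base point. -/
structure IsPrimitive {E : Type*} [NormedAddCommGroup E] [NormedSpace ℝ E] (F f : ℝ → E) :
    Prop where
  locallyIntegrable : LocallyIntegrable f volume
  eq_add_integral (x : ℝ) : F x = F 0 + ∫ s in (0 : ℝ)..x, f s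

lemma absolutelyContinuousOnInterval_of_dist_le {X Y : Type*} [PseudoMetricSpace X]
    [PseudoMetricSpace Y] {f : ℝ → X} {g : ℝ → Y} {a b : ℝ}
    (hg : AbsolutelyContinuousOnInterval g a b)
    (hfg : ∀ x ∈ Set.uIcc a b, ∀ y ∈ Set.uIcc a b, dist (f x) (f y) ≤ dist (g x) (g y)) :
    AbsolutelyContinuousOnInterval f a b := by
  refine squeeze_zero' (.of_forall fun _ ↦ Finset.sum_nonneg fun _ _ ↦ dist_nonneg) ?_ hg
  rw [eventually_inf_principal]
  exact .of_forall fun I hI ↦ Finset.sum_le_sum fun i hi ↦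
    hfg _ (hI.1 i hi).1 _ (hI.1 i hi).2

namespace IsPrimitive

section NormedSpace

variable {E : Type*} [NormedAddCommGroup E] [NormedSpace ℝ E] {F f G g : ℝ → E}

lemma intervalIntegrable (hF : IsPrimitive F f) (a b : ℝ) : IntervalIntegrable f volume a b :=
  (hF.locallyIntegrable.integrableOn_isCompact isCompact_uIcc).intervalIntegrable

lemma sub_eq_integral (hF : IsPrimitive F f) (a b : ℝ) : F b - F a = ∫ s in a..b, f s := by
  rw [hF.eq_add_integral a, hF.eq_add_integral b, add_sub_add_left_eq_sub,
    intervalIntegral.integral_interval_sub_left (hF.intervalIntegrable 0 b)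
      (hF.intervalIntegrable 0 a)]

lemma sub (hF : IsPrimitive F f) (hG : IsPrimitive G g) :
    IsPrimitive (fun x ↦ F x - G x) (fun x ↦ f x - g x) where
  locallyIntegrable := hF.locallyIntegrable.sub hG.locallyIntegrable
  eq_add_integral x := by
    rw [intervalIntegral.integral_sub (hF.intervalIntegrable 0 x) (hG.intervalIntegrable 0 x),
      hF.eq_add_integral x, hG.eq_add_integral x]
    abel

lemma continuous (hF : IsPrimitive F f) : Continuous F := by
  rw [funext hF.eq_add_integral]
  exact continuous_const.add (intervalIntegral.continuous_primitive hF.intervalIntegrable 0)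

lemma absolutelyContinuousOnInterval (hF : IsPrimitive F f) (a b : ℝ) :
    AbsolutelyContinuousOnInterval F a b := by
  have hnorm (x y : ℝ) : IntervalIntegrable (fun s ↦ ‖f s‖) volume x y :=
    (hF.intervalIntegrable x y).norm
  refine absolutelyContinuousOnInterval_of_dist_le
    ((hnorm a b).absolutelyContinuousOnInterval_intervalIntegral Set.left_mem_uIcc)
    fun x _ y _ ↦ ?_
  calc dist (F x) (F y) = ‖∫ s in y..x, f s‖ := by rw [dist_eq_norm, hF.sub_eq_integral]
    _ ≤ |∫ s in y..x, ‖f s‖| := intervalIntegral.norm_integral_le_abs_integral_norm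
    _ = dist (∫ s in a..x, ‖f s‖) (∫ s in a..y, ‖f s‖) := by
      rw [Real.dist_eq, intervalIntegral.integral_interval_sub_left (hnorm a x) (hnorm a y)]

lemma tendsto_atTop (hF : IsPrimitive F f) (hf : IntegrableOn f (Set.Ioi 0)) :
    Tendsto F atTop (𝓝 (F 0 + ∫ x in Set.Ioi 0, f x)) := by
  rw [funext hF.eq_add_integral]
  simpa using (intervalIntegral_tendsto_integral_Ioi 0 hf tendsto_id).const_add (F 0)

lemma tendsto_atBot (hF : IsPrimitive F f) (hf : IntegrableOn f (Set.Iic 0)) :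
    Tendsto F atBot (𝓝 (F 0 - ∫ x in Set.Iic 0, f x)) := by
  refine ((intervalIntegral_tendsto_integral_Iic 0 hf tendsto_id).const_sub (F 0)).congr
    fun x ↦ ?_
  rw [id, ← hF.sub_eq_integral, sub_sub_cancel]

lemma exists_tendsto_integral_eq_sub (hF : IsPrimitive F f) (hf : Integrable f) :
    ∃ Fm Fp : E, Tendsto F atBot (𝓝 Fm) ∧ Tendsto F atTop (𝓝 Fp) ∧ ∫ x, f x = Fp - Fm := by
  refine ⟨_, _, hF.tendsto_atBot hf.integrableOn, hF.tendsto_atTop hf.integrableOn, ?_⟩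
  rw [← intervalIntegral.integral_Iic_add_Ioi (b := 0) hf.integrableOn hf.integrableOn]
  abel

variable [CompleteSpace E]

lemma ae_hasDerivAt (hF : IsPrimitive F f) : ∀ᵐ x, HasDerivAt F (f x) x := by
  filter_upwards [_root_.LocallyIntegrable.ae_hasDerivAt_integral hF.locallyIntegrable] with x hx
  rw [funext hF.eq_add_integral]
  exact (hx 0).const_add _

lemma of_ae_hasDerivAt (hf : LocallyIntegrable f)
    (hac : ∀ x, AbsolutelyContinuousOnInterval F 0 x) (hderiv : ∀ᵐ x, HasDerivAt F (f x) x) :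
    IsPrimitive F f where
  locallyIntegrable := hf
  eq_add_integral x := by
    have hI : IsPrimitive (fun t ↦ ∫ s in (0 : ℝ)..t, f s) f := ⟨hf, by simp⟩
    have hzero : ∀ᵐ t, t ∈ Set.uIcc 0 x →
        HasDerivAt (F - fun t ↦ ∫ s in (0 : ℝ)..t, f s) 0 t := by
      filter_upwards [hderiv, hI.ae_hasDerivAt] with t hFt hIt _
      simpa using hFt.sub hIt
    obtain ⟨C, hC⟩ := ((hac x).sub
      (hI.absolutelyContinuousOnInterval 0 x)).const_of_ae_hasDerivAt_zero hzero
    have hC_left : F 0 = C := by simpa using hC 0 Set.left_mem_uIcc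
    have hC_right := hC x Set.right_mem_uIcc
    rw [hC_left, ← hC_right, Pi.sub_apply, sub_add_cancel]

lemma clm_comp {E' : Type*} [NormedAddCommGroup E'] [NormedSpace ℝ E'] [CompleteSpace E']
    (L : E →L[ℝ] E') (hF : IsPrimitive F f) : IsPrimitive (fun x ↦ L (F x)) (fun x ↦ L (f x)) where
  locallyIntegrable := locallyIntegrableOn_univ.1
    (L.locallyIntegrableOn_comp (hF.locallyIntegrable.locallyIntegrableOn Set.univ))
  eq_add_integral x := by
    rw [L.intervalIntegral_comp_comm (hF.intervalIntegrable 0 x), ← map_add,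
      ← hF.eq_add_integral]

end NormedSpace

lemma mul {A : Type*} [NormedRing A] [NormMulClass A] [NormedAlgebra ℝ A] [CompleteSpace A]
    {F f G g : ℝ → A} (hF : IsPrimitive F f) (hG : IsPrimitive G g) :
    IsPrimitive (fun x ↦ F x * G x) (fun x ↦ f x * G x + F x * g x) := by
  refine of_ae_hasDerivAt ?_ (fun x ↦ ?_) ?_
  · exact (hF.locallyIntegrable.mul_continuous hG.continuous).add
      (hG.locallyIntegrable.continuous_mul hF.continuous)
  · exact (hF.absolutelyContinuousOnInterval 0 x).smul (hG.absolutelyContinuousOnInterval 0 x)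
  · filter_upwards [hF.ae_hasDerivAt, hG.ae_hasDerivAt] with x hFx hGx
    exact hFx.mul hGx

lemma conj {𝕜 : Type*} [RCLike 𝕜] {F f : ℝ → 𝕜} (hF : IsPrimitive F f) :
    IsPrimitive (fun x ↦ (starRingEnd 𝕜) (F x)) (fun x ↦ (starRingEnd 𝕜) (f x)) :=
  hF.clm_comp RCLike.conjCLE.toContinuousLinearMap

end IsPrimitive

section Lagrange

lemma qdL_mul_conj_sub_mul_conj_qdLplus (Q τ u w v z dw dz : ℝ → ℂ) (x : ℝ) :
    qdL Q τ u w dw x * (starRingEnd ℂ) (v x) - u x * (starRingEnd ℂ) (qdLplus Q τ v z dz x) =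
      ((w x + Q x * u x) * (starRingEnd ℂ) (z x) + u x * (starRingEnd ℂ) (dz x)) -
        (dw x * (starRingEnd ℂ) (v x) +
          w x * (starRingEnd ℂ) (z x + (starRingEnd ℂ) (Q x) * v x)) := by
  simp only [qdL, qdLplus, map_neg, map_add, map_mul, map_sub, map_pow, Complex.conj_conj]
  ring

variable {Q u w v z dw dz : ℝ → ℂ}

lemma isPrimitive_qdBracket (τ : ℝ → ℂ)
    (hu : IsPrimitive u (fun s ↦ w s + Q s * u s))
    (hv : IsPrimitive v (fun s ↦ z s + (starRingEnd ℂ) (Q s) * v s))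
    (hw : IsPrimitive w dw) (hz : IsPrimitive z dz) :
    IsPrimitive (qdBracket u w v z) (fun x ↦ qdL Q τ u w dw x * (starRingEnd ℂ) (v x) -
      u x * (starRingEnd ℂ) (qdLplus Q τ v z dz x)) := by
  simp only [qdL_mul_conj_sub_mul_conj_qdLplus]
  exact (hu.mul hz.conj).sub (hw.mul hv.conj)

theorem generalized_lagrange_identity_general {τ : ℝ → ℂ}
    (hu : IsPrimitive u (fun s ↦ w s + Q s * u s))
    (hv : IsPrimitive v (fun s ↦ z s + (starRingEnd ℂ) (Q s) * v s))
    (hw : IsPrimitive w dw) (hz : IsPrimitive z dz)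
    (hluv : Integrable (fun x ↦ qdL Q τ u w dw x * (starRingEnd ℂ) (v x)))
    (hulv : Integrable (fun x ↦ u x * (starRingEnd ℂ) (qdLplus Q τ v z dz x))) :
    ∃ Lm Lp : ℂ, Tendsto (qdBracket u w v z) atBot (𝓝 Lm) ∧
      Tendsto (qdBracket u w v z) atTop (𝓝 Lp) ∧
      (∫ x, qdL Q τ u w dw x * (starRingEnd ℂ) (v x))
          - (∫ x, u x * (starRingEnd ℂ) (qdLplus Q τ v z dz x))
        = Lp - Lm := by
  rw [← integral_sub hluv hulv]
  exact (isPrimitive_qdBracket τ hu hv hw hz).exists_tendsto_integral_eq_sub (hluv.sub hulv)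

end Lagrange

/-- Generalized Lagrange identity on the whole line: if `u, v, l[u], l⁺[v]` are all square
integrable, then the bracket `[u,v](t)` has finite limits at `±∞` and
`∫_ℝ l[u] conj(v) - ∫_ℝ u conj(l⁺[v]) = [u,v](+∞) - [u,v](-∞)`. -/
theorem generalized_lagrange_identity (Q τ u w v z dw dz : ℝ → ℂ)
    (hQmeas : AEStronglyMeasurable Q volume)
    (hQ : LocallyIntegrable (fun s => ‖Q s‖ ^ 2) volume)
    (hτ : LocallyIntegrable τ volume)
    (hu' : LocallyIntegrable (fun s => w s + Q s * u s) volume)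
    (hu : ∀ x : ℝ, u x = u 0 + ∫ s in (0:ℝ)..x, (w s + Q s * u s))
    (hv' : LocallyIntegrable (fun s => z s + (starRingEnd ℂ) (Q s) * v s) volume)
    (hv : ∀ x : ℝ, v x = v 0 + ∫ s in (0:ℝ)..x, (z s + (starRingEnd ℂ) (Q s) * v s))
    (hdw : LocallyIntegrable dw volume)
    (hw : ∀ x : ℝ, w x = w 0 + ∫ s in (0:ℝ)..x, dw s)
    (hdz : LocallyIntegrable dz volume)
    (hz : ∀ x : ℝ, z x = z 0 + ∫ s in (0:ℝ)..x, dz s)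
    (huL2 : MemLp u 2 volume) (hvL2 : MemLp v 2 volume)
    (hluL2 : MemLp (qdL Q τ u w dw) 2 volume)
    (hlvL2 : MemLp (qdLplus Q τ v z dz) 2 volume) :
    ∃ Lm Lp : ℂ, Tendsto (qdBracket u w v z) atBot (𝓝 Lm) ∧
      Tendsto (qdBracket u w v z) atTop (𝓝 Lp) ∧
      (∫ x : ℝ, qdL Q τ u w dw x * (starRingEnd ℂ) (v x))
          - (∫ x : ℝ, u x * (starRingEnd ℂ) (qdLplus Q τ v z dz x))
        = Lp - Lm :=
  generalized_lagrange_identity_general ⟨hu', hu⟩ ⟨hv', hv⟩ ⟨hdw, hw⟩ ⟨hdz, hz⟩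
    (hluL2.integrable_mul hvL2.star) (huL2.integrable_mul hlvL2.star)
end
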